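/- arXiv:1612.01694 — 2 statements merged into one kernel-verified Lean document; each statement's English description precedes it below -/
import Mathlib

section
/- Let k ≥ 1 and h ≥ 2 be positive integers and let G = (U,V,E) be a bipartite graph. Suppose that for every subset S of U, |Γ(S)| ≥ (h - 1 + 1/⌈k/h⌉)·|S|. Then G has an (h, hk)-matching. -/
open scoped Classical

noncomputable section

variable {U V : Type*}

/-- The neighbourhood `Γ(S) ⊆ V` of a set `S` of left vertices of the bipartite
graph with edge set `E ⊆ U × V`. -/
def nbhd (E : Finset (U × V)) (S : Finset U) : Finset V :=
  (E.filter fun p => p.1 ∈ S).image Prod.snd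

/-- The neighbourhood `Γ(T) ⊆ U` of a set `T` of right vertices. -/
def nbhdR (E : Finset (U × V)) (T : Finset V) : Finset U :=
  (E.filter fun p => p.2 ∈ T).image Prod.fst

/-- The degree of a left vertex `u` in the bipartite graph with edge set `E`. -/
def degL (E : Finset (U × V)) (u : U) : ℕ := (E.filter fun p => p.1 = u).card

/-- The degree of a right vertex `v` in the bipartite graph with edge set `E`. -/
def degR (E : Finset (U × V)) (v : V) : ℕ := (E.filter fun p => p.2 = v).card

/-- The bipartite graph on the vertex set `U ⊕ V` determined by an edge set
`F ⊆ U × V`. -/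
def mkGraph (F : Finset (U × V)) : SimpleGraph (U ⊕ V) :=
  SimpleGraph.fromRel fun x y => ∃ p ∈ F, x = Sum.inl p.1 ∧ y = Sum.inr p.2

/-- The edges of `F` lying inside the connected component `c` of `mkGraph F`. -/
def componentEdges (F : Finset (U × V)) (c : (mkGraph F).ConnectedComponent) :
    Finset (U × V) :=
  F.filter fun p => (mkGraph F).connectedComponentMk (Sum.inl p.1) = c

/-- An `(s,t)`-matching in the bipartite graph `G = (U,V,E)`: a subset `F ⊆ E` such
that in `H = (U,V,F)` every connected component is a tree (i.e. `H` is acyclic) with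
at most `t` edges, and every vertex `u ∈ U` has degree exactly `s` in `H`. -/
def IsSTMatching (s t : ℕ) (E F : Finset (U × V)) : Prop :=
  F ⊆ E ∧ (mkGraph F).IsAcyclic ∧
    (∀ c : (mkGraph F).ConnectedComponent, (componentEdges F c).card ≤ t) ∧
    ∀ u : U, degL F u = s

/-!
Write `h = g + 1` and `⌈k/h⌉ = r + 1`. Hall's theorem with multiplicities turns the hypothesis into
an integral transport: every left vertex ships out `(r + 1) * g + 1` units and every right vertex
receives at most `r + 1`. The support of a transport with minimal support is a forest, since pushing
flow around a cycle would empty one more edge. Since a single edge carries at most `r + 1` units,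
every left vertex has degree at least `h` in that forest.

Root each tree, and let every left vertex of degree greater than `h` drop the edge to its parent and
enough further edges to have degree exactly `h`. Afterwards each component contains at most one left
vertex that has lost an edge. A component with `n` left vertices has at most `g * n + 1` right
vertices, by connectedness, and it carries at least `(n - 1) * ((r + 1) * g + 1) + h` units. So
`(n - 1) * ((r + 1) * g + 1) + h ≤ (g * n + 1) * (r + 1)`, that is, `n ≤ r * h + 1 ≤ k`.
-/

section RootedForest

variable {W : Type*} {G : SimpleGraph W}

-- Otherwise `q` followed backwards and then `p` never backtracks, so it is the only path from `y`
-- to `r`, which therefore starts with an edge of `q`.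
lemma mk_snd_mem_edges_or_of_isAcyclic (hG : G.IsAcyclic) {x y r : W} (hxy : x ≠ y)
    (p : G.Path x r) (p' : G.Path y r) (q : G.Path x y) :
    s(x, p.1.snd) ∈ q.1.edges ∨ s(y, p'.1.snd) ∈ q.1.edges := by
  by_contra! ⟨hx, hy⟩
  have hpath : (q.1.reverse.append p.1).IsPath := by
    rw [hG.isPath_iff_isChain, SimpleGraph.Walk.edges_append, List.isChain_append]
    refine ⟨(hG.isPath_iff_isChain _).1 q.2.reverse, (hG.isPath_iff_isChain _).1 p.2, ?_⟩
    rintro e he _ he' rfl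
    have he_mem : e ∈ q.1.edges := by simpa using List.mem_of_getLast? he
    obtain ⟨_ | ⟨_, _⟩, _⟩ := p
    · simp at he'
    · obtain rfl : s(x, _) = e := by simpa using he'
      simp [he_mem] at hx
  have hp' : p'.1 = q.1.reverse.append p.1 :=
    congrArg Subtype.val ((hG.subsingleton_path y r).elim p' ⟨_, hpath⟩)
  obtain ⟨_, _, _, hq'⟩ := q.1.reverse.exists_eq_cons_of_ne hxy.symm
  rw [hp', ← List.mem_reverse, ← SimpleGraph.Walk.edges_reverse, hq'] at hy
  simp at hy

lemma exists_parent_mem_edges_of_isAcyclic (hG : G.IsAcyclic) :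
    ∃ parent : W → W, ∀ x y, x ≠ y → ∀ q : G.Path x y,
      s(x, parent x) ∈ q.1.edges ∨ s(y, parent y) ∈ q.1.edges := by
  let root (x : W) : W := (G.connectedComponentMk x).out
  have hroot (x : W) : G.Reachable x (root x) :=
    SimpleGraph.ConnectedComponent.exact (Quot.out_eq (G.connectedComponentMk x)).symm
  choose toRoot htoRoot using fun x => (hroot x).exists_isPath
  refine ⟨fun x => (toRoot x).snd, fun x y hxy q => ?_⟩
  have hr : root y = root x := by
    simp only [root, SimpleGraph.ConnectedComponent.sound q.1.reachable]
  simpa using mk_snd_mem_edges_or_of_isAcyclic hG hxy ⟨_, htoRoot x⟩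
    ⟨(toRoot y).copy rfl hr, by simpa using htoRoot y⟩ q

end RootedForest

/-- The pair `p` as an unordered edge on the vertex set `U ⊕ V`, so that walks of `mkGraph F` can be
compared with subsets of `U × V`. -/
def crossEdge (p : U × V) : Sym2 (U ⊕ V) := s(Sum.inl p.1, Sum.inr p.2)

lemma crossEdge_injective : Function.Injective (crossEdge : U × V → Sym2 (U ⊕ V)) := by
  rintro ⟨u, v⟩ ⟨u', v'⟩ h
  simpa [crossEdge] using h

lemma mkGraph_adj_iff {F : Finset (U × V)} {x y : U ⊕ V} :
    (mkGraph F).Adj x y ↔ ∃ p ∈ F, crossEdge p = s(x, y) := by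
  rcases x with u | v <;> rcases y with u' | v' <;> simp [mkGraph, crossEdge]

lemma edgeSet_mkGraph (F : Finset (U × V)) : (mkGraph F).edgeSet = crossEdge '' F := by
  ext e
  induction e with
  | _ x y => exact mkGraph_adj_iff

lemma mkGraph_mono {F F' : Finset (U × V)} (h : F ⊆ F') : mkGraph F ≤ mkGraph F' := by
  rw [← SimpleGraph.edgeSet_subset_edgeSet, edgeSet_mkGraph, edgeSet_mkGraph]
  exact Set.image_mono (mod_cast h)

lemma reachable_inl_inr_of_mem {F : Finset (U × V)} {p : U × V} (hp : p ∈ F) :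
    (mkGraph F).Reachable (Sum.inl p.1) (Sum.inr p.2) :=
  (mkGraph_adj_iff.2 ⟨p, hp, rfl⟩).reachable

lemma exists_subset_card_eq_forall_apply_ne {α β : Type*} {φ : α → β}
    (hφ : Function.Injective φ) {s : Finset α} {d : ℕ} (hd : d ≤ s.card) (e : β) :
    ∃ t ⊆ s, t.card = d ∧ (d < s.card → ∀ x ∈ t, φ x ≠ e) := by
  rcases hd.eq_or_lt with hs | hs
  · exact ⟨s, subset_rfl, hs.symm, fun h => absurd h hs.not_lt⟩
  · have hle_one : (s.filter (φ · = e)).card ≤ 1 :=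
      Finset.card_le_one.2 fun x hx y hy =>
        hφ ((Finset.mem_filter.1 hx).2.trans (Finset.mem_filter.1 hy).2.symm)
    have hothers : d ≤ (s.filter fun x => ¬ φ x = e).card := by
      have := Finset.card_filter_add_card_filter_not (s := s) (φ · = e)
      omega
    obtain ⟨t, ht, hcard⟩ := Finset.exists_subset_card_eq hothers
    exact ⟨t, ht.trans (Finset.filter_subset _ _), hcard,
      fun _ x hx => (Finset.mem_filter.1 (ht hx)).2⟩

-- Root the forest and let every vertex of degree greater than `d` give up its parent edge: the path
-- in `A` between two such vertices runs through one of the two parent edges, so it is destroyed.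
lemma exists_subset_degL_eq_of_isAcyclic {A : Finset (U × V)} (hA : (mkGraph A).IsAcyclic) {d : ℕ}
    (hd : ∀ u, d ≤ degL A u) :
    ∃ F ⊆ A, (∀ u, degL F u = d) ∧ ∀ u u', d < degL A u → d < degL A u' →
      (mkGraph F).Reachable (Sum.inl u) (Sum.inl u') → u = u' := by
  obtain ⟨parent, hparent⟩ := exists_parent_mem_edges_of_isAcyclic hA
  have hselect (u : U) : ∃ N ⊆ A.filter (fun p => p.1 = u), N.card = d ∧
      (d < degL A u → ∀ p ∈ N, crossEdge p ≠ s(Sum.inl u, parent (Sum.inl u))) :=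
    exists_subset_card_eq_forall_apply_ne crossEdge_injective (hd u) _
  choose N hNA hNcard hNparent using hselect
  set F := A.filter fun p => p ∈ N p.1
  have hFA : F ⊆ A := Finset.filter_subset _ _
  refine ⟨F, hFA, fun u => ?_, fun u u' hu hu' hreach => ?_⟩
  · rw [← hNcard u, degL]
    congr 1
    ext p
    have hNu : p ∈ N u → p ∈ A ∧ p.1 = u := fun hp => Finset.mem_filter.1 (hNA u hp)
    grind
  · have hparent_notMem (u : U) (hu : d < degL A u) :
        s(Sum.inl u, parent (Sum.inl u)) ∉ (mkGraph F).edgeSet := by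
      rw [edgeSet_mkGraph]
      rintro ⟨p, hp, hpe⟩
      obtain rfl : p.1 = u := by
        have hmem := Sym2.mem_mk_left (Sum.inl u) (parent (Sum.inl u))
        rw [← hpe] at hmem
        simpa [crossEdge, eq_comm] using hmem
      exact hNparent p.1 hu p (Finset.mem_filter.1 hp).2 hpe
    by_contra hne
    obtain ⟨q, hq⟩ := hreach.exists_isPath
    have hmem := hparent _ _ (Sum.inl_injective.ne hne)
      ⟨q.mapLe (mkGraph_mono hFA), hq.mapLe _⟩
    rw [SimpleGraph.Walk.edges_mapLe_eq_edges] at hmem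
    rcases hmem with h | h
    · exact hparent_notMem u hu (q.edges_subset_edgeSet h)
    · exact hparent_notMem u' hu' (q.edges_subset_edgeSet h)

section ComponentEdges

variable {F : Finset (U × V)} {c : (mkGraph F).ConnectedComponent}

lemma connectedComponentMk_inr_eq_of_mem {p : U × V} (hp : p ∈ componentEdges F c) :
    (mkGraph F).connectedComponentMk (Sum.inr p.2) = c := by
  obtain ⟨hpF, hpc⟩ := Finset.mem_filter.1 hp
  rw [← hpc]
  exact (SimpleGraph.ConnectedComponent.sound (reachable_inl_inr_of_mem hpF)).symm

lemma filter_componentEdges_fst {u : U} (hu : u ∈ (componentEdges F c).image Prod.fst) :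
    (componentEdges F c).filter (fun p => p.1 = u) = F.filter fun p => p.1 = u := by
  obtain ⟨q, hq, rfl⟩ := Finset.mem_image.1 hu
  ext p
  grind [componentEdges]

lemma sum_componentEdges_fst {M : Type*} [AddCommMonoid M] (f : U × V → M) :
    ∑ p ∈ componentEdges F c, f p =
      ∑ u ∈ (componentEdges F c).image Prod.fst, ∑ p ∈ F with p.1 = u, f p := by
  rw [← Finset.sum_fiberwise_of_maps_to fun p hp => Finset.mem_image_of_mem Prod.fst hp]
  exact Finset.sum_congr rfl fun u hu => by rw [filter_componentEdges_fst hu]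

lemma card_componentEdges {d : ℕ} (hF : ∀ u, degL F u = d) :
    (componentEdges F c).card = d * ((componentEdges F c).image Prod.fst).card := by
  unfold degL at hF
  rw [Finset.card_eq_sum_ones, sum_componentEdges_fst]
  simp only [hF, Finset.sum_const, smul_eq_mul, mul_one, mul_comm]

lemma crossEdge_mem_image_of_adj {x y : U ⊕ V} (h : (mkGraph F).Adj x y)
    (hx : (mkGraph F).connectedComponentMk x = c) :
    s(x, y) ∈ (componentEdges F c).image crossEdge := by
  obtain ⟨p, hp, hpe⟩ := mkGraph_adj_iff.1 h
  refine Finset.mem_image.2 ⟨p, Finset.mem_filter.2 ⟨hp, ?_⟩, hpe⟩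
  rcases Sym2.eq_iff.1 hpe with ⟨rfl, -⟩ | ⟨-, rfl⟩
  · exact hx
  · exact (SimpleGraph.ConnectedComponent.sound (reachable_inl_inr_of_mem hp)).trans hx

lemma supp_eq_disjSum_image (hc : (componentEdges F c).Nonempty) :
    c.supp = (((componentEdges F c).image Prod.fst).disjSum
      ((componentEdges F c).image Prod.snd) : Finset (U ⊕ V)) := by
  obtain ⟨p₀, hp₀⟩ := hc
  ext x
  rw [SimpleGraph.ConnectedComponent.mem_supp_iff, Finset.mem_coe]
  constructor
  · intro hx
    by_cases hxp : x = Sum.inl p₀.1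
    · exact hxp ▸ Finset.inl_mem_disjSum.2 (Finset.mem_image_of_mem _ hp₀)
    · obtain ⟨w⟩ := SimpleGraph.ConnectedComponent.exact
        (hx.trans (Finset.mem_filter.1 hp₀).2.symm)
      obtain ⟨y, hxy, -⟩ := w.exists_eq_cons_of_ne hxp
      obtain ⟨p, hp, hpe⟩ := Finset.mem_image.1 (crossEdge_mem_image_of_adj hxy hx)
      rcases Sym2.eq_iff.1 hpe with ⟨rfl, -⟩ | ⟨-, rfl⟩
      · exact Finset.inl_mem_disjSum.2 (Finset.mem_image_of_mem _ hp)
      · exact Finset.inr_mem_disjSum.2 (Finset.mem_image_of_mem _ hp)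
  · intro hx
    obtain ⟨u, hu, rfl⟩ | ⟨v, hv, rfl⟩ := Finset.mem_disjSum.1 hx
    · obtain ⟨p, hp, rfl⟩ := Finset.mem_image.1 hu
      exact (Finset.mem_filter.1 hp).2
    · obtain ⟨p, hp, rfl⟩ := Finset.mem_image.1 hv
      exact connectedComponentMk_inr_eq_of_mem hp

lemma natCard_edgeSet_toSimpleGraph_le :
    Nat.card c.toSimpleGraph.edgeSet ≤ (componentEdges F c).card := by
  let toSym2 : c.toSimpleGraph.edgeSet → (componentEdges F c).image crossEdge := fun e =>
    ⟨e.1.map Subtype.val, by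
      obtain ⟨e, he⟩ := e
      induction e with
      | _ x y => exact crossEdge_mem_image_of_adj he x.2⟩
  have hinj : Function.Injective toSym2 := fun e e' h =>
    Subtype.ext (Sym2.map.injective Subtype.val_injective (congrArg Subtype.val h))
  calc Nat.card c.toSimpleGraph.edgeSet
      ≤ Nat.card ((componentEdges F c).image crossEdge) := Nat.card_le_card_of_injective _ hinj
    _ ≤ (componentEdges F c).card := by
      rw [Nat.card_eq_fintype_card, Fintype.card_coe]
      exact Finset.card_image_le

lemma card_image_fst_add_card_image_snd_le :
    ((componentEdges F c).image Prod.fst).card + ((componentEdges F c).image Prod.snd).card ≤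
      (componentEdges F c).card + 1 := by
  rcases (componentEdges F c).eq_empty_or_nonempty with hc | hc
  · simp [hc]
  · calc ((componentEdges F c).image Prod.fst).card + ((componentEdges F c).image Prod.snd).card
        = Nat.card c.supp := by
          rw [supp_eq_disjSum_image hc, Nat.card_coe_set_eq, Set.ncard_coe_finset,
            Finset.card_disjSum]
      _ ≤ Nat.card c.toSimpleGraph.edgeSet + 1 :=
          c.connected_toSimpleGraph.card_vert_le_card_edgeSet_add_one
      _ ≤ (componentEdges F c).card + 1 := Nat.add_le_add_right natCard_edgeSet_toSimpleGraph_le 1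

end ComponentEdges

/-- `f` is an integral transport along the edges `F`: every left vertex ships out exactly `a` units
and every right vertex receives at most `b`. Values of `f` outside `F` are ignored. -/
structure IsTransport (a b : ℤ) (F : Finset (U × V)) (f : U × V → ℤ) : Prop where
  nonneg : ∀ p ∈ F, 0 ≤ f p
  row_sum : ∀ u, ∑ p ∈ F with p.1 = u, f p = a
  col_sum_le : ∀ v, ∑ p ∈ F with p.2 = v, f p ≤ b

namespace IsTransport

variable {a b : ℤ} {F : Finset (U × V)} {f : U × V → ℤ}

lemma apply_le (hf : IsTransport a b F f) {p : U × V} (hp : p ∈ F) : f p ≤ b :=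
  (Finset.single_le_sum (fun q hq => hf.nonneg q (Finset.mem_filter.1 hq).1)
    (Finset.mem_filter.2 ⟨hp, rfl⟩ : p ∈ F.filter fun q => q.2 = p.2)).trans (hf.col_sum_le p.2)

lemma le_degL_mul (hf : IsTransport a b F f) (u : U) : a ≤ degL F u * b := by
  rw [← hf.row_sum u, degL, ← nsmul_eq_mul]
  exact Finset.sum_le_card_nsmul _ _ _ fun p hp => hf.apply_le (Finset.mem_filter.1 hp).1

lemma erase (hf : IsTransport a b F f) {p : U × V} (hp : f p = 0) :
    IsTransport a b (F.erase p) f where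
  nonneg q hq := hf.nonneg q (Finset.mem_of_mem_erase hq)
  row_sum u := by
    rw [Finset.filter_erase, Finset.sum_erase _ hp, hf.row_sum]
  col_sum_le v := by
    rw [Finset.filter_erase, Finset.sum_erase _ hp]
    exact hf.col_sum_le v

lemma sum_componentEdges_le {F' : Finset (U × V)} (hf : IsTransport a b F f) (hF' : F' ⊆ F)
    (c : (mkGraph F').ConnectedComponent) :
    ∑ p ∈ componentEdges F' c, f p ≤ ((componentEdges F' c).image Prod.snd).card * b := by
  rw [← Finset.sum_fiberwise_of_maps_to fun p hp => Finset.mem_image_of_mem Prod.snd hp,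
    ← nsmul_eq_mul]
  refine Finset.sum_le_card_nsmul _ _ _ fun v _ => (hf.col_sum_le v).trans' ?_
  exact Finset.sum_le_sum_of_subset_of_nonneg
    (Finset.filter_subset_filter _ ((Finset.filter_subset _ _).trans hF'))
    fun p hp _ => hf.nonneg p (Finset.mem_filter.1 hp).1

end IsTransport

-- `σ` is the unit flow along `w`, a step from right to left counting as `-1` on its edge; the flow
-- conservation law is stated against test functions `φ` because it then telescopes along `w`.
lemma exists_flow_of_isTrail {F : Finset (U × V)} {x y : U ⊕ V} (w : (mkGraph F).Walk x y)
    (hw : w.IsTrail) :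
    ∃ σ : U × V → ℤ, (∀ p, |σ p| = if crossEdge p ∈ w.edges then 1 else 0) ∧
      ∀ φ : U ⊕ V → ℤ, ∑ p ∈ F, σ p * (φ (Sum.inl p.1) - φ (Sum.inr p.2)) = φ x - φ y := by
  induction w with
  | nil => exact ⟨0, by simp, by simp⟩
  | @cons x z y hxz w ih =>
    obtain ⟨hw, hnotMem⟩ := (SimpleGraph.Walk.isTrail_cons hxz w).1 hw
    obtain ⟨σ, hσ, hsum⟩ := ih hw
    obtain ⟨q, hq, hqe⟩ := mkGraph_adj_iff.1 hxz
    have hσq : σ q = 0 := by simpa [hqe, hnotMem] using hσ q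
    obtain ⟨ε, hε, hφ⟩ : ∃ ε : ℤ, |ε| = 1 ∧ ∀ φ : U ⊕ V → ℤ,
        ε * (φ (Sum.inl q.1) - φ (Sum.inr q.2)) = φ x - φ z := by
      rcases Sym2.eq_iff.1 hqe with ⟨rfl, rfl⟩ | ⟨rfl, rfl⟩
      · exact ⟨1, by simp, by simp⟩
      · exact ⟨-1, by simp, by simp⟩
    refine ⟨σ + Pi.single q ε, fun p => ?_, fun φ => ?_⟩
    · by_cases hpq : p = q
      · simp [hpq, hσq, hε, hqe]
      · have hpe : crossEdge p ≠ s(x, z) := hqe ▸ crossEdge_injective.ne hpq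
        simp [hpq, hpe, hσ]
    · simp only [Pi.add_apply, add_mul, Finset.sum_add_distrib, hsum, Pi.single_apply, ite_mul,
        zero_mul, Finset.sum_ite_eq', hq, if_true, hφ]
      ring

lemma exists_circulation_of_not_isAcyclic {F : Finset (U × V)} (hF : ¬ (mkGraph F).IsAcyclic) :
    ∃ σ : U × V → ℤ, (∀ p, |σ p| ≤ 1) ∧ (∃ p ∈ F, σ p = -1) ∧
      (∀ u, ∑ p ∈ F with p.1 = u, σ p = 0) ∧ ∀ v, ∑ p ∈ F with p.2 = v, σ p = 0 := by
  simp only [SimpleGraph.IsAcyclic, not_forall, not_not] at hF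
  obtain ⟨x, w, hw⟩ := hF
  obtain ⟨σ, hσ, hsum⟩ := exists_flow_of_isTrail w hw.isTrail
  have hrow (u : U) : ∑ p ∈ F with p.1 = u, σ p = 0 := by
    simpa [Finset.sum_filter, Pi.single_apply] using hsum (Pi.single (Sum.inl u) 1)
  have hcol (v : V) : ∑ p ∈ F with p.2 = v, σ p = 0 := by
    simpa [Finset.sum_filter, Pi.single_apply] using hsum (Pi.single (Sum.inr v) 1)
  have hσ_le (p : U × V) : |σ p| ≤ 1 := by rw [hσ]; split_ifs <;> simp
  obtain ⟨p, hp, hσp⟩ : ∃ p ∈ F, |σ p| = 1 := by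
    obtain ⟨y, hxy, w', rfl⟩ := SimpleGraph.Walk.not_nil_iff.1 hw.not_nil
    obtain ⟨p, hp, hpe⟩ := mkGraph_adj_iff.1 hxy
    exact ⟨p, hp, by simp [hσ, hpe]⟩
  rcases (abs_eq zero_le_one).1 hσp with h | h
  · exact ⟨-σ, by simpa using hσ_le, ⟨p, hp, by simp [h]⟩, by simpa using hrow,
      by simpa using hcol⟩
  · exact ⟨σ, hσ_le, ⟨p, hp, h⟩, hrow, hcol⟩

lemma IsTransport.exists_isAcyclic {a b : ℤ} {E : Finset (U × V)} {f : U × V → ℤ}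
    (hf : IsTransport a b E f) :
    ∃ A ⊆ E, ∃ g, IsTransport a b A g ∧ (∀ p ∈ A, 0 < g p) ∧ (mkGraph A).IsAcyclic := by
  obtain ⟨A, hAE, ⟨g, hg⟩, hmin⟩ :=
    exists_minimal_le_of_wellFoundedLT (fun A => ∃ g, IsTransport a b A g) E ⟨f, hf⟩
  have hne {g : U × V → ℤ} (hg : IsTransport a b A g) {p : U × V} (hp : p ∈ A) : g p ≠ 0 :=
    fun h0 => Finset.notMem_erase p A (hmin ⟨g, hg.erase h0⟩ (Finset.erase_subset p A) hp)
  refine ⟨A, hAE, g, hg, fun p hp => (hg.nonneg p hp).lt_of_ne' (hne hg hp), ?_⟩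
  by_contra hcyc
  obtain ⟨σ, hσ, ⟨p₀, hp₀, hσp₀⟩, hrow, hcol⟩ := exists_circulation_of_not_isAcyclic hcyc
  obtain ⟨q, hq, hqmin⟩ := (A.filter (σ · = -1)).exists_min_image g
    ⟨p₀, Finset.mem_filter.2 ⟨hp₀, hσp₀⟩⟩
  obtain ⟨hqA, hσq⟩ := Finset.mem_filter.1 hq
  have hpush : IsTransport a b A (fun p => g p + g q * σ p) :=
    { nonneg := fun p hp => by
        have hp0 := hg.nonneg p hp
        have hq0 := hg.nonneg q hqA
        obtain h | h | h : σ p = -1 ∨ σ p = 0 ∨ σ p = 1 := by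
          have := abs_le.1 (hσ p)
          omega
        · have := hqmin p (Finset.mem_filter.2 ⟨hp, h⟩)
          rw [h]
          linarith
        · simpa [h] using hp0
        · rw [h]
          linarith
      row_sum := fun u => by
        rw [Finset.sum_add_distrib, ← Finset.mul_sum, hrow, hg.row_sum, mul_zero, add_zero]
      col_sum_le := fun v => by
        rw [Finset.sum_add_distrib, ← Finset.mul_sum, hcol, mul_zero, add_zero]
        exact hg.col_sum_le v }
  exact hne hpush hqA (by simp [hσq])

lemma exists_injective_of_mul_card_le {I W : Type*} {a b : ℕ} {N : I → Finset W}
    (h : ∀ S : Finset I, a * S.card ≤ b * (S.biUnion N).card) :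
    ∃ φ : I × Fin a → W × Fin b, Function.Injective φ ∧ ∀ x, (φ x).1 ∈ N x.1 := by
  let N' (x : I × Fin a) : Finset (W × Fin b) := N x.1 ×ˢ Finset.univ
  suffices hall : ∀ S : Finset (I × Fin a), S.card ≤ (S.biUnion N').card by
    obtain ⟨φ, hφ, hmem⟩ := (Finset.all_card_le_biUnion_card_iff_exists_injective N').1 hall
    exact ⟨φ, hφ, fun x => (Finset.mem_product.1 (hmem x)).1⟩
  intro S
  calc S.card
      ≤ (S.image Prod.fst ×ˢ (Finset.univ : Finset (Fin a))).card :=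
        Finset.card_le_card fun x hx => by simpa using ⟨x.2, hx⟩
    _ = a * (S.image Prod.fst).card := by simp [mul_comm]
    _ ≤ b * ((S.image Prod.fst).biUnion N).card := h _
    _ = (S.biUnion N').card := by
      have : S.biUnion N' = (S.image Prod.fst).biUnion N ×ˢ Finset.univ := by
        ext ⟨w, j⟩
        simp [N']
      simp [this, mul_comm]

lemma exists_isTransport {a b : ℕ} {E : Finset (U × V)}
    (h : ∀ S : Finset U, a * S.card ≤ b * (nbhd E S).card) : ∃ f, IsTransport a b E f := by
  have hnbhd (S : Finset U) : S.biUnion (fun u => nbhd E {u}) = nbhd E S := by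
    ext v
    simp [nbhd, and_comm]
  obtain ⟨φ, hφ, hmem⟩ :=
    exists_injective_of_mul_card_le (N := fun u => nbhd E {u}) fun S => (hnbhd S).symm ▸ h S
  have hφE (u : U) (i : Fin a) : (u, (φ (u, i)).1) ∈ E := by simpa [nbhd] using hmem (u, i)
  let copies (p : U × V) : Finset (Fin a) := Finset.univ.filter fun i => (φ (p.1, i)).1 = p.2
  refine ⟨fun p => (copies p).card, fun p _ => by positivity, fun u => ?_, fun v => ?_⟩
  · have hmaps : Set.MapsTo (fun i => (u, (φ (u, i)).1)) (Finset.univ : Finset (Fin a))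
        (E.filter fun p => p.1 = u) := fun i _ => by simp [hφE]
    have hcopies : ∑ p ∈ E with p.1 = u, (copies p).card = (Finset.univ : Finset (Fin a)).card := by
      rw [Finset.card_eq_sum_card_fiberwise hmaps]
      refine Finset.sum_congr rfl fun p hp => ?_
      obtain ⟨-, rfl⟩ := Finset.mem_filter.1 hp
      simp [copies, Prod.ext_iff]
    rw [Finset.card_univ, Fintype.card_fin] at hcopies
    exact_mod_cast hcopies
  · have hle : ((E.filter fun p => p.2 = v).sigma copies).card ≤
        (Finset.univ : Finset (Fin b)).card := by
      refine Finset.card_le_card_of_injOn (fun x => (φ (x.1.1, x.2)).2)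
        (fun _ _ => Finset.mem_univ _) ?_
      rintro ⟨⟨u, w⟩, i⟩ hx ⟨⟨u', w'⟩, i'⟩ hy hxy
      simp only [copies, Finset.coe_sigma, Set.mem_sigma_iff, Finset.mem_coe, Finset.mem_filter,
        Finset.mem_univ, true_and] at hx hy
      obtain ⟨⟨-, rfl⟩, hi⟩ := hx
      obtain ⟨⟨-, rfl⟩, hi'⟩ := hy
      obtain ⟨rfl, rfl⟩ := Prod.ext_iff.1 (hφ (Prod.ext (hi.trans hi'.symm) hxy))
      rfl
    rw [Finset.card_sigma, Finset.card_univ, Fintype.card_fin] at hle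
    exact_mod_cast hle

lemma degL_le_sum {F : Finset (U × V)} {f : U × V → ℤ} (hf : ∀ p ∈ F, 0 < f p) (u : U) :
    (degL F u : ℤ) ≤ ∑ p ∈ F with p.1 = u, f p := by
  simpa [degL] using Finset.card_nsmul_le_sum (F.filter fun p => p.1 = u) f 1
    fun p hp => hf p (Finset.mem_filter.1 hp).1

lemma IsTransport.row_sum_of_subset {a b : ℤ} {A F : Finset (U × V)} {f : U × V → ℤ}
    (hf : IsTransport a b A f) (hFA : F ⊆ A) {u : U} (hu : degL A u ≤ degL F u) :
    ∑ p ∈ F with p.1 = u, f p = a := by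
  rw [Finset.eq_of_subset_of_card_le (Finset.filter_subset_filter _ hFA) hu, hf.row_sum]

lemma exists_forall_mem_erase_not {α : Type*} {s : Finset α} (hs : s.Nonempty) {P : α → Prop}
    (hP : ∀ x ∈ s, ∀ y ∈ s, P x → P y → x = y) : ∃ x ∈ s, ∀ y ∈ s.erase x, ¬ P y := by
  by_cases hex : ∃ x ∈ s, P x
  · obtain ⟨x, hx, hPx⟩ := hex
    exact ⟨x, hx, fun y hy hPy =>
      Finset.ne_of_mem_erase hy (hP y (Finset.mem_of_mem_erase hy) x hx hPy hPx)⟩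
  · push Not at hex
    exact hs.imp fun x hx => ⟨hx, fun y hy => hex y (Finset.mem_of_mem_erase hy)⟩

-- At most one left vertex of the component lost edges of `A`; it still ships `1` along each of its
-- `d` edges, and every other left vertex ships its full amount `a`.
lemma IsTransport.le_sum_componentEdges {a b : ℤ} {d : ℕ} {A F : Finset (U × V)} {f : U × V → ℤ}
    (hf : IsTransport a b A f) (hpos : ∀ p ∈ A, 0 < f p) (hFA : F ⊆ A)
    (hdeg : ∀ u, degL F u = d)
    (hunique : ∀ u u', d < degL A u → d < degL A u' →
      (mkGraph F).Reachable (Sum.inl u) (Sum.inl u') → u = u')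
    {c : (mkGraph F).ConnectedComponent} (hc : (componentEdges F c).Nonempty) :
    d + (((componentEdges F c).image Prod.fst).card - 1 : ℤ) * a ≤
      ∑ p ∈ componentEdges F c, f p := by
  set T := (componentEdges F c).image Prod.fst with hT
  have hmk {u : U} (hu : u ∈ T) : (mkGraph F).connectedComponentMk (Sum.inl u) = c := by
    obtain ⟨p, hp, rfl⟩ := Finset.mem_image.1 hu
    exact (Finset.mem_filter.1 hp).2
  obtain ⟨u₀, hu₀, hintact⟩ : ∃ u₀ ∈ T, ∀ u ∈ T.erase u₀, ¬ d < degL A u :=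
    exists_forall_mem_erase_not (hc.image _) fun u hu u' hu' hlt hlt' =>
      hunique u u' hlt hlt' (SimpleGraph.ConnectedComponent.exact ((hmk hu).trans (hmk hu').symm))
  have hrow (u : U) (hu : u ∈ T.erase u₀) : ∑ p ∈ F with p.1 = u, f p = a :=
    hf.row_sum_of_subset hFA ((not_lt.1 (hintact u hu)).trans_eq (hdeg u).symm)
  calc d + (T.card - 1 : ℤ) * a
      ≤ ∑ p ∈ F with p.1 = u₀, f p + (T.card - 1 : ℤ) * a := by
        rw [← hdeg u₀]
        exact Int.add_le_add_right (degL_le_sum (fun p hp => hpos p (hFA hp)) u₀) _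
    _ = ∑ p ∈ componentEdges F c, f p := by
        rw [sum_componentEdges_fst, ← hT, ← Finset.add_sum_erase _ _ hu₀,
          Finset.sum_congr rfl hrow, Finset.sum_const, nsmul_eq_mul,
          Finset.cast_card_erase_of_mem hu₀]

lemma IsTransport.card_image_fst_le {g r : ℕ} {A F : Finset (U × V)} {f : U × V → ℤ}
    (hf : IsTransport ((r + 1) * g + 1) (r + 1) A f) (hpos : ∀ p ∈ A, 0 < f p) (hFA : F ⊆ A)
    (hdeg : ∀ u, degL F u = g + 1)
    (hunique : ∀ u u', g + 1 < degL A u → g + 1 < degL A u' →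
      (mkGraph F).Reachable (Sum.inl u) (Sum.inl u') → u = u')
    (c : (mkGraph F).ConnectedComponent) :
    ((componentEdges F c).image Prod.fst).card ≤ r * (g + 1) + 1 := by
  rcases (componentEdges F c).eq_empty_or_nonempty with hc | hc
  · simp [hc]
  have hlower := hf.le_sum_componentEdges hpos hFA hdeg hunique hc
  have hupper := hf.sum_componentEdges_le hFA c
  set n := ((componentEdges F c).image Prod.fst).card
  have hsnd : ((componentEdges F c).image Prod.snd).card ≤ g * n + 1 := by
    have hconn := card_image_fst_add_card_image_snd_le (c := c)
    rw [card_componentEdges hdeg] at hconn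
    linarith
  have hsnd_mul : (((componentEdges F c).image Prod.snd).card : ℤ) * (r + 1) ≤
      (g * n + 1) * (r + 1) :=
    mul_le_mul_of_nonneg_right (mod_cast hsnd) (by positivity)
  zify
  push_cast at hlower
  linarith

lemma IsSTMatching.mono {s t t' : ℕ} {E F : Finset (U × V)} (hF : IsSTMatching s t E F)
    (h : t ≤ t') : IsSTMatching s t' E F :=
  ⟨hF.1, hF.2.1, fun c => (hF.2.2.1 c).trans h, hF.2.2.2⟩

lemma exists_isSTMatching {g r : ℕ} {E : Finset (U × V)}
    (hE : ∀ S : Finset U, ((r + 1) * g + 1) * S.card ≤ (r + 1) * (nbhd E S).card) :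
    ∃ F, IsSTMatching (g + 1) ((g + 1) * (r * (g + 1) + 1)) E F := by
  obtain ⟨f₀, hf₀⟩ := exists_isTransport hE
  obtain ⟨A, hAE, f, hf, hpos, hA⟩ := hf₀.exists_isAcyclic
  push_cast at hf
  have hdeg_le (u : U) : g + 1 ≤ degL A u := by
    by_contra! hlt
    have hle := hf.le_degL_mul u
    have hmul : (degL A u : ℤ) * (r + 1) ≤ g * (r + 1) :=
      mul_le_mul_of_nonneg_right (by omega) (by positivity)
    linarith
  obtain ⟨F, hFA, hdeg, hunique⟩ := exists_subset_degL_eq_of_isAcyclic hA hdeg_le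
  refine ⟨F, hFA.trans hAE, hA.anti (mkGraph_mono hFA), fun c => ?_, hdeg⟩
  rw [card_componentEdges hdeg]
  exact Nat.mul_le_mul_left _ (hf.card_image_fst_le hpos hFA hdeg hunique c)

theorem stmt_0_general {U V : Type*} {k h : ℕ} (hk : 1 ≤ k) (hh : 1 ≤ h) {E : Finset (U × V)}
    (hN : ∀ S : Finset U,
      ((h : ℝ) - 1 + 1 / (Nat.ceil ((k : ℝ) / (h : ℝ)) : ℝ)) * S.card ≤
        ((nbhd E S).card : ℝ)) :
    ∃ F : Finset (U × V), IsSTMatching h (h * k) E F := by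
  obtain ⟨g, rfl⟩ := Nat.exists_eq_add_of_le' hh
  have hk_pos : (0 : ℝ) < k := by exact_mod_cast hk
  obtain ⟨r, hr⟩ : ∃ r, Nat.ceil ((k : ℝ) / (g + 1 : ℕ)) = r + 1 :=
    Nat.exists_eq_add_of_le' (Nat.ceil_pos.2 (by positivity))
  have hrk : r * (g + 1) + 1 ≤ k := by
    have hlt : (r : ℝ) < k / (g + 1 : ℕ) := Nat.lt_ceil.1 (by omega)
    rw [lt_div_iff₀ (by positivity)] at hlt
    exact_mod_cast hlt
  have hE (S : Finset U) : ((r + 1) * g + 1) * S.card ≤ (r + 1) * (nbhd E S).card := by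
    have hS := mul_le_mul_of_nonneg_left (hN S) (by positivity : (0 : ℝ) ≤ r + 1)
    rw [hr] at hS
    push_cast at hS
    have hcoeff : (r + 1 : ℝ) * ((g + 1 - 1 + 1 / (r + 1)) * S.card) =
        ((r + 1) * g + 1) * S.card := by
      field_simp
      ring
    rw [hcoeff] at hS
    exact_mod_cast hS
  obtain ⟨F, hF⟩ := exists_isSTMatching hE
  exact ⟨F, hF.mono (Nat.mul_le_mul_left _ hrk)⟩

/-- **Theorem 2 (summary).** Let `k ≥ 1` and `h ≥ 2` and let `G = (U,V,E)` be a
bipartite graph with `|Γ(S)| ≥ (h − 1 + 1/⌈k/h⌉)·|S|` for every `S ⊆ U`.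
Then `G` has an `(h, hk)`-matching. -/
theorem stmt_0 {U V : Type*} [Fintype U] [Fintype V] (k h : ℕ) (hk : 1 ≤ k)
    (hh : 2 ≤ h) (E : Finset (U × V))
    (hN : ∀ S : Finset U,
      ((h : ℝ) - 1 + 1 / (Nat.ceil ((k : ℝ) / (h : ℝ)) : ℝ)) * S.card ≤
        ((nbhd E S).card : ℝ)) :
    ∃ F : Finset (U × V), IsSTMatching h (h * k) E F := by
  exact stmt_0_general hk (by omega) hN
end
end

section
/- Let G = (U,V,E) be a bipartite graph in which every vertex of U has degree at most 3, and suppose that |Γ(S)| ≥ (5/3)·|S| for every subset S of U. Then G has a (2,4)-matching. -/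
open scoped Classical

noncomputable section

variable {U V : Type*}

/-!
By Hall's theorem with capacities, the expansion hypothesis gives an integral flow in which every
`u : U` sends out five units and every `v : V` takes in at most three. As `u` has at most three
neighbours, its flow is `3 + 2`, `2 + 2 + 1` or `3 + 1 + 1`. Always select the edges carrying at
least two units; no two of them meet in `V`. This gives the vertices of the first two kinds both
their edges, and those of the third kind, whose edge of flow three meets no other flow, still
need one of their two edges of flow one.

Attach each `v : V` to the vertex sending it at least two units if there is one, and otherwise leave
it on its own. A double count shows that Hall's theorem, applied once more, lets every `u` choose
one of two admissible right neighbours so that each of these groups is chosen at most twice.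
Selected edges with a common right end have left ends choosing the same group, so a component
has at most two left vertices and hence four edges; and two left vertices never share two right
neighbours, which rules out cycles.
-/

section

open Finset

section Choice

variable {ι α β : Type*} [DecidableEq α]

theorem exists_choice_card_fiber_le (t : ι → Finset α) (c : α → ℕ)
    (hall : ∀ S : Finset ι, #S ≤ ∑ a ∈ S.biUnion t, c a) :
    ∃ f : ι → α, (∀ i, f i ∈ t i) ∧ ∀ (S : Finset ι) (a : α), #{i ∈ S | f i = a} ≤ c a := by
  let copies (i : ι) : Finset (Σ a, Fin (c a)) := (t i).sigma fun _ => univ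
  have hcopies (S : Finset ι) : #S ≤ #(S.biUnion copies) := by
    have : S.biUnion copies = (S.biUnion t).sigma fun _ => univ := by
      ext; simp [copies]
    simpa [this] using hall S
  obtain ⟨g, g_inj, hg⟩ := (all_card_le_biUnion_card_iff_exists_injective copies).1 hcopies
  refine ⟨fun i => (g i).1, fun i => (mem_sigma.1 (hg i)).1, fun S a => ?_⟩
  calc #{i ∈ S | (g i).1 = a}
      ≤ #((univ : Finset (Fin (c a))).map (.sigmaMk (β := fun a => Fin (c a)) a)) := by
        refine card_le_card_of_injOn g (fun i hi => ?_) g_inj.injOn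
        obtain ⟨-, rfl⟩ := mem_filter.1 hi
        exact mem_map_of_mem _ (mem_univ (g i).2)
    _ = c a := by rw [card_map, card_univ, Fintype.card_fin]

theorem exists_choice_card_comp_fiber_le (D : ι → Finset β) (g : β → α) (c : α → ℕ) {k : ℕ}
    (hk : 0 < k) (hD : ∀ i, k ≤ #(D i))
    (hg : ∀ (S : Finset ι) (a : α), ∑ i ∈ S, #{b ∈ D i | g b = a} ≤ k * c a) :
    ∃ f : ι → β, (∀ i, f i ∈ D i) ∧
      ∀ (S : Finset ι) (a : α), #{i ∈ S | g (f i) = a} ≤ c a := by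
  have hall (S : Finset ι) : #S ≤ ∑ a ∈ S.biUnion fun i => (D i).image g, c a := by
    set T := S.biUnion fun i => (D i).image g
    have hT : ∀ i ∈ S, Set.MapsTo g (D i) T := fun i hi b hb =>
      mem_biUnion.2 ⟨i, hi, mem_image_of_mem g hb⟩
    refine Nat.le_of_mul_le_mul_left ?_ hk
    calc k * #S ≤ ∑ i ∈ S, #(D i) := by
          simpa [mul_comm] using card_nsmul_le_sum S (fun i => #(D i)) k fun i _ => hD i
      _ = ∑ i ∈ S, ∑ a ∈ T, #{b ∈ D i | g b = a} :=
          sum_congr rfl fun i hi => card_eq_sum_card_fiberwise (hT i hi)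
      _ = ∑ a ∈ T, ∑ i ∈ S, #{b ∈ D i | g b = a} := sum_comm
      _ ≤ k * ∑ a ∈ T, c a := by
          rw [mul_sum]
          exact sum_le_sum fun a _ => hg S a
  obtain ⟨h, h_mem, h_card⟩ := exists_choice_card_fiber_le _ c hall
  choose f f_mem hf using fun i => mem_image.1 (h_mem i)
  refine ⟨f, f_mem, fun S a => ?_⟩
  simpa only [hf] using h_card S a

end Choice

section Forest

variable {F : Finset (U × V)}

theorem mem_of_reachable_of_adj_closed {W : Type*} {G : SimpleGraph W} {T : Set W}
    (hT : ∀ x y, G.Adj x y → x ∈ T → y ∈ T) {x y : W} (h : G.Reachable x y) (hx : x ∈ T) :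
    y ∈ T := by
  obtain ⟨w⟩ := h
  induction w with
  | nil => exact hx
  | cons hadj _ ih => exact ih (hT _ _ hadj hx)

@[simp]
theorem mkGraph_adj_inl_inr {u : U} {v : V} :
    (mkGraph F).Adj (.inl u) (.inr v) ↔ (u, v) ∈ F := by
  simp [mkGraph]

@[simp]
theorem mkGraph_adj_inr_inl {u : U} {v : V} :
    (mkGraph F).Adj (.inr v) (.inl u) ↔ (u, v) ∈ F := by
  simp [mkGraph]

@[simp]
theorem not_mkGraph_adj_inl_inl {u u' : U} : ¬ (mkGraph F).Adj (.inl u) (.inl u') := by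
  simp [mkGraph]

@[simp]
theorem not_mkGraph_adj_inr_inr {v v' : V} : ¬ (mkGraph F).Adj (.inr v) (.inr v') := by
  simp [mkGraph]

@[simp]
theorem mem_nbhd {E : Finset (U × V)} {S : Finset U} {v : V} :
    v ∈ nbhd E S ↔ ∃ u ∈ S, (u, v) ∈ E := by
  simp only [nbhd, mem_image, mem_filter, Prod.exists, exists_eq_right]
  exact exists_congr fun _ => and_comm

theorem degL_eq_card [Fintype V] (u : U) : degL F u = #{v | (u, v) ∈ F} := by
  have : {p ∈ F | p.1 = u} = ({v | (u, v) ∈ F} : Finset V).image (Prod.mk u) := by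
    ext ⟨u', v⟩
    simp only [mem_filter, mem_image, mem_univ, true_and, Prod.mk.injEq]
    grind
  rw [degL, this, card_image_of_injective _ (Prod.mk_right_injective u)]

variable {κ : Type*} {k : U → κ}

theorem eq_of_mkGraph_reachable (hk : ∀ u u' v, (u, v) ∈ F → (u', v) ∈ F → k u = k u')
    {u u' : U} (h : (mkGraph F).Reachable (.inl u) (.inl u')) : k u' = k u := by
  let T : Set (U ⊕ V) :=
    {z | z.elim (fun u₁ => k u₁ = k u) fun v => ∀ u₁, (u₁, v) ∈ F → k u₁ = k u}
  refine mem_of_reachable_of_adj_closed (T := T) ?_ h rfl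
  rintro (a | a) (b | b) hab ha
  · exact absurd hab not_mkGraph_adj_inl_inl
  · exact fun u₁ hu₁ => (hk _ _ _ hu₁ (mkGraph_adj_inl_inr.1 hab)).trans ha
  · exact ha b (mkGraph_adj_inr_inl.1 hab)
  · exact absurd hab not_mkGraph_adj_inr_inr

variable [Fintype U] [DecidableEq κ]

theorem card_componentEdges_le (hk : ∀ u u' v, (u, v) ∈ F → (u', v) ∈ F → k u = k u') {m s : ℕ}
    (hfiber : ∀ a, #{u | k u = a} ≤ m) (hdeg : ∀ u, degL F u ≤ s)
    (c : (mkGraph F).ConnectedComponent) : #(componentEdges F c) ≤ s * m := by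
  obtain hc | ⟨⟨u, v⟩, huv⟩ := (componentEdges F c).eq_empty_or_nonempty
  · simp [hc]
  have hmaps : ∀ p ∈ componentEdges F c, p.1 ∈ ({u' | k u' = k u} : Finset U) := fun p hp => by
    have hreach : (mkGraph F).Reachable (.inl u) (.inl p.1) :=
      SimpleGraph.ConnectedComponent.exact
        ((mem_filter.1 huv).2.trans (mem_filter.1 hp).2.symm)
    simpa using eq_of_mkGraph_reachable hk hreach
  calc #(componentEdges F c) ≤ s * #{u' | k u' = k u} :=
        card_le_mul_card_image_of_maps_to hmaps s fun u' _ =>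
          (card_le_card (filter_subset_filter _ (filter_subset _ _))).trans (hdeg u')
    _ ≤ s * m := Nat.mul_le_mul_left s (hfiber _)

theorem isBridge_mkGraph (hk : ∀ u u' v, (u, v) ∈ F → (u', v) ∈ F → k u = k u')
    (hfiber : ∀ a, #{u | k u = a} ≤ 2)
    (hshare : ∀ u u' v v', u ≠ u' → (u, v) ∈ F → (u', v) ∈ F → (u, v') ∈ F → (u', v') ∈ F →
      v = v') {u : U} {v : V} (huv : (u, v) ∈ F) :
    (mkGraph F).IsBridge s(.inl u, .inr v) := by
  have hpair {u' z : U} (hne : u' ≠ u) (hu' : k u' = k u) (hz : k z = k u) :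
      z = u ∨ z = u' := by
    by_contra! hcon
    refine (hfiber (k u)).not_gt (two_lt_card.2 ⟨u, ?_, u', ?_, z, ?_, ?_⟩) <;> grind
  rw [SimpleGraph.isBridge_iff]
  intro hreach
  -- The part of the component of `v` that remains after deleting the edge `(u, v)`.
  let T : Set (U ⊕ V) := {y | y.elim (fun z => z ≠ u ∧ (z, v) ∈ F)
    fun w => w = v ∨ ∃ z, z ≠ u ∧ (z, v) ∈ F ∧ (z, w) ∈ F}
  have hu : Sum.inl u ∈ T := by
    refine mem_of_reachable_of_adj_closed ?_ hreach.symm (Or.inl rfl)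
    rintro (a | a) (b | b) hab ha <;> rw [SimpleGraph.deleteEdges_adj] at hab
    · exact absurd hab.1 not_mkGraph_adj_inl_inl
    · exact Or.inr ⟨a, ha.1, ha.2, mkGraph_adj_inl_inr.1 hab.1⟩
    · have hba : (b, a) ∈ F := mkGraph_adj_inr_inl.1 hab.1
      obtain rfl | ⟨z, hzu, hzv, hza⟩ := ha
      · exact ⟨by rintro rfl; simp at hab, hba⟩
      · have hkz : k z = k u := hk _ _ _ hzv huv
        obtain rfl | rfl := hpair hzu hkz ((hk _ _ _ hba hza).trans hkz)
        · obtain rfl := hshare _ _ _ _ hzu hzv huv hza hba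
          simp at hab
        · exact ⟨hzu, hzv⟩
    · exact absurd hab.1 not_mkGraph_adj_inr_inr
  exact hu.1 rfl

theorem isAcyclic_mkGraph (hk : ∀ u u' v, (u, v) ∈ F → (u', v) ∈ F → k u = k u')
    (hfiber : ∀ a, #{u | k u = a} ≤ 2)
    (hshare : ∀ u u' v v', u ≠ u' → (u, v) ∈ F → (u', v) ∈ F → (u, v') ∈ F → (u', v') ∈ F →
      v = v') :
    (mkGraph F).IsAcyclic := by
  rw [SimpleGraph.isAcyclic_iff_forall_adj_isBridge]
  rintro (a | a) (b | b) hab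
  · exact absurd hab not_mkGraph_adj_inl_inl
  · exact isBridge_mkGraph hk hfiber hshare (mkGraph_adj_inl_inr.1 hab)
  · rw [Sym2.eq_swap]
    exact isBridge_mkGraph hk hfiber hshare (mkGraph_adj_inr_inl.1 hab)
  · exact absurd hab not_mkGraph_adj_inr_inr

end Forest

theorem card_filter_pos_le_sum {ι : Type*} (s : Finset ι) (z : ι → ℕ) :
    #{i ∈ s | 0 < z i} ≤ ∑ i ∈ s, z i := by
  rw [card_filter]
  refine sum_le_sum fun i _ => ?_
  split_ifs <;> omega

section Row

variable [Fintype V]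

/-- The heavy neighbours of a left vertex sending `y v` units of flow to `v`: those receiving at
least two units. -/
def heavy (y : V → ℕ) : Finset V := {v | 2 ≤ y v}

/-- The light neighbours of a left vertex sending `y v` units of flow to `v`: those receiving
exactly one unit. -/
def light (y : V → ℕ) : Finset V := {v | y v = 1}

/-- The two admissible choices of a left vertex sending `y v` units of flow to `v`: its heavy
neighbours if there are two of them, and its light neighbours otherwise. -/
def anchors (y : V → ℕ) : Finset V := if #(heavy y) = 2 then heavy y else light y

variable {y : V → ℕ} {a v : V}

@[simp]
theorem mem_heavy : v ∈ heavy y ↔ 2 ≤ y v := by simp [heavy]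

@[simp]
theorem mem_light : v ∈ light y ↔ y v = 1 := by simp [light]

theorem pos_of_mem_anchors (hv : v ∈ anchors y) : 0 < y v := by
  unfold anchors at hv
  split_ifs at hv <;> simp only [mem_heavy, mem_light] at hv <;> omega

theorem two_mul_card_heavy_le_sum (y : V → ℕ) : 2 * #(heavy y) ≤ ∑ v, y v :=
  calc 2 * #(heavy y) ≤ ∑ v ∈ heavy y, y v := by
        simpa [mul_comm] using card_nsmul_le_sum (heavy y) y 2 fun v hv => mem_heavy.1 hv
    _ ≤ ∑ v, y v := sum_le_sum_of_subset (subset_univ _)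

theorem card_heavy_add_card_light (y : V → ℕ) : #(heavy y) + #(light y) = #{v | 0 < y v} := by
  rw [← card_union_of_disjoint]
  · congr 1
    ext v
    simp only [mem_union, mem_heavy, mem_light, mem_filter, mem_univ, true_and]
    omega
  · exact disjoint_left.2 fun v h h' => by simp_all

theorem sum_heavy_add_card_light (y : V → ℕ) :
    ∑ v ∈ heavy y, y v + #(light y) = ∑ v, y v := by
  rw [heavy, light, sum_filter, card_filter, ← sum_add_distrib]
  refine sum_congr rfl fun v _ => ?_
  split_ifs <;> omega

theorem card_heavy_eq_two_or (hsum : ∑ v, y v = 5) (hle : ∀ v, y v ≤ 3)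
    (hsupp : #{v | 0 < y v} ≤ 3) :
    #(heavy y) = 2 ∨ ∃ v, heavy y = {v} ∧ y v = 3 ∧ #(light y) = 2 := by
  have hcard := card_heavy_add_card_light y
  have htotal := sum_heavy_add_card_light y
  have hheavy := two_mul_card_heavy_le_sum y
  have hupper : ∑ v ∈ heavy y, y v ≤ #(heavy y) * 3 := sum_le_card_nsmul _ _ _ fun v _ => hle v
  obtain htwo | hone : #(heavy y) = 2 ∨ #(heavy y) = 1 := by omega
  · exact .inl htwo
  · obtain ⟨v, hv⟩ := card_eq_one.1 hone
    have hyv := hle v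
    rw [hv, sum_singleton] at htotal
    exact .inr ⟨v, hv, by omega, by omega⟩

theorem card_anchors (hsum : ∑ v, y v = 5) (hle : ∀ v, y v ≤ 3) (hsupp : #{v | 0 < y v} ≤ 3) :
    #(anchors y) = 2 := by
  obtain htwo | ⟨v, hv, -, hlight⟩ := card_heavy_eq_two_or hsum hle hsupp
  · simp [anchors, htwo]
  · simp [anchors, hv, hlight]

theorem card_insert_heavy (hsum : ∑ v, y v = 5) (hle : ∀ v, y v ≤ 3)
    (hsupp : #{v | 0 < y v} ≤ 3) (ha : a ∈ anchors y) : #(insert a (heavy y)) = 2 := by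
  obtain htwo | ⟨v, hv, hyv, -⟩ := card_heavy_eq_two_or hsum hle hsupp
  · rw [anchors, if_pos htwo] at ha
    rw [insert_eq_of_mem ha, htwo]
  · have ha : y a = 1 := by simpa [anchors, hv] using ha
    rw [hv, card_pair]
    rintro rfl
    omega

theorem eq_three_of_mem_heavy (hsum : ∑ v, y v = 5) (hle : ∀ v, y v ≤ 3)
    (hsupp : #{v | 0 < y v} ≤ 3) (ha : a ∈ anchors y) (ha' : a ∉ heavy y) (hv : v ∈ heavy y) :
    y v = 3 := by
  obtain htwo | ⟨w, hw, hyw, -⟩ := card_heavy_eq_two_or hsum hle hsupp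
  · exact absurd (by simpa only [anchors, if_pos htwo] using ha) ha'
  · rw [hw, mem_singleton] at hv
    rwa [hv]

end Row

section Flow

variable {x : U → V → ℕ}

/-- The hub of a right vertex `v` under the flow `x`: the left vertex sending at least two units to
`v` if there is one, and `v` itself otherwise. It names the component in which `v` will lie. -/
def hub (x : U → V → ℕ) (v : V) : U ⊕ V :=
  if h : ∃ u, 2 ≤ x u v then .inl h.choose else .inr v

theorem two_le_of_hub_eq_inl {u : U} {v : V} (h : hub x v = .inl u) : 2 ≤ x u v := by
  unfold hub at h
  split_ifs at h with hex
  exact Sum.inl.inj h ▸ hex.choose_spec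

theorem eq_of_hub_eq_inr {v w : V} (h : hub x v = .inr w) : v = w := by
  unfold hub at h
  split_ifs at h
  exact Sum.inr.inj h

variable [Fintype U] [Fintype V] {E : Finset (U × V)} {p q : ℕ}

/-- An integral flow along the edges of `E` in which every left vertex sends out exactly `p` units
and every right vertex takes in at most `q` units; `x u v` is the flow from `u` to `v`. -/
structure IsFlow (E : Finset (U × V)) (p q : ℕ) (x : U → V → ℕ) : Prop where
  mem_of_pos : ∀ {u v}, 0 < x u v → (u, v) ∈ E
  sum_row : ∀ u, ∑ v, x u v = p
  sum_col_le : ∀ v, ∑ u, x u v ≤ q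

theorem exists_isFlow (hE : ∀ S : Finset U, p * #S ≤ q * #(nbhd E S)) :
    ∃ x : U → V → ℕ, IsFlow E p q x := by
  let t (i : U × Fin p) : Finset V := nbhd E {i.1}
  have hall (S : Finset (U × Fin p)) : #S ≤ ∑ _v ∈ S.biUnion t, q := by
    have hproj : #S ≤ p * #(S.image Prod.fst) := by
      have hsub : S ⊆ S.image Prod.fst ×ˢ univ := fun i hi =>
        mk_mem_product (mem_image_of_mem _ hi) (mem_univ _)
      simpa [mul_comm] using card_le_card hsub
    have hunion : S.biUnion t = nbhd E (S.image Prod.fst) := by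
      ext v
      simp [t]
    rw [sum_const, smul_eq_mul, mul_comm, hunion]
    exact hproj.trans (hE _)
  obtain ⟨f, hf, hcard⟩ := exists_choice_card_fiber_le t (fun _ => q) hall
  refine ⟨fun u v => #{i | f (u, i) = v}, ⟨fun {u v} h => ?_, fun u => ?_, fun v => ?_⟩⟩
  · obtain ⟨i, hi⟩ := card_pos.1 h
    obtain rfl := (mem_filter.1 hi).2
    simpa [t] using hf (u, i)
  · simpa using (card_eq_sum_card_fiberwise (s := univ) (t := univ)
      (f := fun i => f (u, i)) (by simp)).symm
  · simpa only [card_filter, Fintype.sum_prod_type] using hcard univ v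

/-- The edges carrying at least two units of the flow `x`, together with the edges `(u, f u)`. -/
def selectedEdges (x : U → V → ℕ) (f : U → V) : Finset (U × V) :=
  {e | e.2 ∈ insert (f e.1) (heavy (x e.1))}

@[simp]
theorem mem_selectedEdges {f : U → V} {u : U} {v : V} :
    (u, v) ∈ selectedEdges x f ↔ v ∈ insert (f u) (heavy (x u)) := by
  simp [selectedEdges]

theorem pos_of_mem_selectedEdges {f : U → V} {u : U} {v : V}
    (hf : ∀ u, f u ∈ anchors (x u)) (h : (u, v) ∈ selectedEdges x f) : 0 < x u v := by
  rcases mem_insert.1 (mem_selectedEdges.1 h) with rfl | hv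
  · exact pos_of_mem_anchors (hf u)
  · exact two_pos.trans_le (mem_heavy.1 hv)

namespace IsFlow

variable {u u' : U} {v v' : V}

theorem card_support_col_le (hx : IsFlow E p q x) (v : V) : #{w | 0 < x w v} ≤ q :=
  (card_filter_pos_le_sum univ _).trans (hx.sum_col_le v)

theorem add_card_support_col_le (hx : IsFlow E p q x) (u : U) (v : V) :
    x u v + #{w | 0 < x w v} ≤ q + 1 := by
  have hothers := card_filter_pos_le_sum (univ.erase u) fun w => x w v
  have hsum := add_sum_erase univ (fun w => x w v) (mem_univ u)
  have herase := pred_card_le_card_erase (s := ({w | 0 < x w v} : Finset U)) (a := u)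
  have hcol := hx.sum_col_le v
  rw [← filter_erase] at herase
  omega

theorem le (hx : IsFlow E p q x) (u : U) (v : V) : x u v ≤ q :=
  (single_le_sum_of_canonicallyOrdered (f := fun u => x u v) (mem_univ u)).trans (hx.sum_col_le v)

theorem add_le (hx : IsFlow E p q x) (h : u ≠ u') (v : V) : x u v + x u' v ≤ q := by
  rw [← sum_pair h (f := fun u => x u v)]
  exact (sum_le_sum_of_subset (subset_univ _)).trans (hx.sum_col_le v)

theorem card_support_le_degL (hx : IsFlow E p q x) (u : U) : #{v | 0 < x u v} ≤ degL E u := by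
  rw [degL_eq_card]
  exact card_le_card (monotone_filter_right _ fun v _ hv => hx.mem_of_pos hv)

theorem hub_eq_inl (hx : IsFlow E p 3 x) (h : 2 ≤ x u v) : hub x v = .inl u := by
  have hex : ∃ w, 2 ≤ x w v := ⟨u, h⟩
  rw [hub, dif_pos hex, Sum.inl.injEq]
  by_contra hne
  have := hx.add_le hne v
  have := hex.choose_spec
  omega

theorem sum_card_support_hub_fiber_le (hx : IsFlow E 5 3 x) (a : U ⊕ V) :
    ∑ v with hub x v = a, #{u | 0 < x u v} ≤ 4 := by
  rcases a with w | w
  · have hfiber : ({v | hub x v = .inl w} : Finset V) ⊆ heavy (x w) := fun v hv =>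
      mem_heavy.2 (two_le_of_hub_eq_inl (mem_filter.1 hv).2)
    have hheavy : 2 * #(heavy (x w)) ≤ 5 := hx.sum_row w ▸ two_mul_card_heavy_le_sum (x w)
    calc ∑ v with hub x v = .inl w, #{u | 0 < x u v}
        ≤ ∑ v ∈ heavy (x w), #{u | 0 < x u v} := sum_le_sum_of_subset hfiber
      _ ≤ #(heavy (x w)) * 2 := sum_le_card_nsmul _ _ _ fun v hv => by
          have := hx.add_card_support_col_le w v
          have := mem_heavy.1 hv
          omega
      _ ≤ 4 := by omega
  · have hfiber : ({v | hub x v = .inr w} : Finset V) ⊆ {w} := fun v hv =>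
      mem_singleton.2 (eq_of_hub_eq_inr (mem_filter.1 hv).2)
    calc ∑ v with hub x v = .inr w, #{u | 0 < x u v}
        ≤ ∑ v ∈ {w}, #{u | 0 < x u v} := sum_le_sum_of_subset hfiber
      _ ≤ 4 := by
          rw [sum_singleton]
          exact (hx.card_support_col_le w).trans (by simp)

theorem exists_anchor_choice (hx : IsFlow E 5 3 x) (hdeg : ∀ u, degL E u ≤ 3) :
    ∃ f : U → V, (∀ u, f u ∈ anchors (x u)) ∧ ∀ a, #{u | hub x (f u) = a} ≤ 2 := by
  have hanchors (u : U) : 2 ≤ #(anchors (x u)) :=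
    (card_anchors (hx.sum_row u) (hx.le u) ((hx.card_support_le_degL u).trans (hdeg u))).ge
  have hcount (S : Finset U) (a : U ⊕ V) :
      ∑ u ∈ S, #{v ∈ anchors (x u) | hub x v = a} ≤ 2 * 2 :=
    calc ∑ u ∈ S, #{v ∈ anchors (x u) | hub x v = a}
        ≤ ∑ u, #{v ∈ ({v | hub x v = a} : Finset V) | 0 < x u v} := by
          refine (sum_le_sum_of_subset (subset_univ S)).trans
            (sum_le_sum fun u _ => card_le_card fun v hv => ?_)
          simpa using ⟨(mem_filter.1 hv).2, pos_of_mem_anchors (mem_filter.1 hv).1⟩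
      _ = ∑ v with hub x v = a, #{u | 0 < x u v} :=
          sum_card_bipartiteAbove_eq_sum_card_bipartiteBelow fun u v => 0 < x u v
      _ ≤ 2 * 2 := hx.sum_card_support_hub_fiber_le a
  obtain ⟨f, hf, hcard⟩ :=
    exists_choice_card_comp_fiber_le _ (hub x) (fun _ => 2) two_pos hanchors hcount
  exact ⟨f, hf, hcard univ⟩

variable {f : U → V}

theorem degL_selectedEdges (hx : IsFlow E 5 3 x) (hdeg : ∀ u, degL E u ≤ 3)
    (hf : ∀ u, f u ∈ anchors (x u)) (u : U) : degL (selectedEdges x f) u = 2 := by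
  simp only [degL_eq_card, mem_selectedEdges, filter_univ_mem]
  exact card_insert_heavy (hx.sum_row u) (hx.le u)
    ((hx.card_support_le_degL u).trans (hdeg u)) (hf u)

theorem anchor_mem_heavy (hx : IsFlow E 5 3 x) (hdeg : ∀ u, degL E u ≤ 3)
    (hf : ∀ u, f u ∈ anchors (x u)) (hne : u ≠ u') (hv : v ∈ heavy (x u)) (hv' : 0 < x u' v) :
    f u ∈ heavy (x u) := by
  by_contra hfu
  have hthree : x u v = 3 := eq_three_of_mem_heavy (hx.sum_row u) (hx.le u)
    ((hx.card_support_le_degL u).trans (hdeg u)) (hf u) hfu hv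
  have := hx.add_le hne v
  omega

theorem hub_anchor_eq (hx : IsFlow E 5 3 x) (hdeg : ∀ u, degL E u ≤ 3)
    (hf : ∀ u, f u ∈ anchors (x u)) (hne : u ≠ u') (h : (u, v) ∈ selectedEdges x f)
    (h' : (u', v) ∈ selectedEdges x f) : hub x (f u) = hub x v := by
  rcases mem_insert.1 (mem_selectedEdges.1 h) with rfl | hv
  · rfl
  · have hfu := hx.anchor_mem_heavy hdeg hf hne hv (pos_of_mem_selectedEdges hf h')
    rw [hx.hub_eq_inl (mem_heavy.1 hfu), hx.hub_eq_inl (mem_heavy.1 hv)]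

theorem eq_anchor_of_shared (hx : IsFlow E 5 3 x) (hdeg : ∀ u, degL E u ≤ 3)
    (hf : ∀ u, f u ∈ anchors (x u)) (hne : u ≠ u') (hfu : f u ∉ heavy (x u))
    (h : (u, v) ∈ selectedEdges x f) (h' : (u', v) ∈ selectedEdges x f) : v = f u :=
  (mem_insert.1 (mem_selectedEdges.1 h)).resolve_right fun hv =>
    hfu (hx.anchor_mem_heavy hdeg hf hne hv (pos_of_mem_selectedEdges hf h'))

theorem eq_of_shared (hx : IsFlow E 5 3 x) (hdeg : ∀ u, degL E u ≤ 3)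
    (hf : ∀ u, f u ∈ anchors (x u)) (hne : u ≠ u')
    (huv : (u, v) ∈ selectedEdges x f) (hu'v : (u', v) ∈ selectedEdges x f)
    (huv' : (u, v') ∈ selectedEdges x f) (hu'v' : (u', v') ∈ selectedEdges x f) : v = v' := by
  by_cases hfu : f u ∈ heavy (x u)
  · by_cases hfu' : f u' ∈ heavy (x u')
    · rw [mem_selectedEdges, insert_eq_of_mem hfu, mem_heavy] at huv
      rw [mem_selectedEdges, insert_eq_of_mem hfu', mem_heavy] at hu'v
      have := hx.add_le hne v
      omega
    · rw [hx.eq_anchor_of_shared hdeg hf hne.symm hfu' hu'v huv,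
        hx.eq_anchor_of_shared hdeg hf hne.symm hfu' hu'v' huv']
  · rw [hx.eq_anchor_of_shared hdeg hf hne hfu huv hu'v,
      hx.eq_anchor_of_shared hdeg hf hne hfu huv' hu'v']

end IsFlow

end Flow

end

/-- **Conjecture of Bonacina, Galesi, Huynh and Wollan.** Let `G = (U,V,E)` be a
bipartite graph in which every vertex of `U` has degree at most `3` and
`|Γ(S)| ≥ (5/3)·|S|` for every `S ⊆ U`. Then `G` has a `(2,4)`-matching. -/
theorem stmt_2 {U V : Type*} [Fintype U] [Fintype V] (E : Finset (U × V))
    (hdeg : ∀ u : U, degL E u ≤ 3)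
    (hN : ∀ S : Finset U, (5 / 3 : ℝ) * S.card ≤ ((nbhd E S).card : ℝ)) :
    ∃ F : Finset (U × V), IsSTMatching 2 4 E F := by
  have hE (S : Finset U) : 5 * S.card ≤ 3 * (nbhd E S).card := by
    have h : (5 * S.card : ℝ) ≤ 3 * (nbhd E S).card := by linarith [hN S]
    exact_mod_cast h
  obtain ⟨x, hx⟩ := exists_isFlow hE
  obtain ⟨f, hf, hfiber⟩ := hx.exists_anchor_choice hdeg
  have hhub (u u' : U) (v : V) (h : (u, v) ∈ selectedEdges x f)
      (h' : (u', v) ∈ selectedEdges x f) : hub x (f u) = hub x (f u') := by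
    obtain rfl | hne := eq_or_ne u u'
    · rfl
    · exact (hx.hub_anchor_eq hdeg hf hne h h').trans (hx.hub_anchor_eq hdeg hf hne.symm h' h).symm
  have hdegree := hx.degL_selectedEdges hdeg hf
  refine ⟨selectedEdges x f, fun _ h => hx.mem_of_pos (pos_of_mem_selectedEdges hf h),
    isAcyclic_mkGraph hhub hfiber fun _ _ _ _ => hx.eq_of_shared hdeg hf,
    card_componentEdges_le hhub hfiber fun u => (hdegree u).le, hdegree⟩
end
end
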